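/- Let (V, ‖·‖) be a normed vector space, ε > 0, Θ ⊆ V convex with diam(Θ) ≥ 12ε, and integers k ≥ ℓ ≥ 1 and m ≥ k(N(B(0,1), ‖·‖, 1/4) + 1). Suppose E ⊆ Θ is a finite set of expert locations and f is a deterministic multi-winner voting rule (a function mapping candidate locations and a reported top-k ranking profile to a set of ℓ candidates) such that for every set C of m candidate locations in Θ, every q ∈ ℝ^m, and every top-k ranking profile ≻^k consistent with q, the cumulative regret satisfies max over ℓ-element subsets S' of [m] of Σ_{j∈S'} q_j − Σ_{j∈f(C,E,≻^k)} q_j ≤ ε. Then |E| ≥ M(Θ, ‖·‖, 24ε/ℓ)·(m/(k(N(B(0,1), ‖·‖, 1/4) + 1)) − 1). -/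

import Mathlib

open scoped Classical

section VotingDefs

variable {V : Type*} [NormedAddCommGroup V] [NormedSpace ℝ V]

/-- An expert with top-`k` ranking `pref : Fin k → Fin m` prefers candidate `j` to `j'`:
`j` is ranked at some position `h`, and `j'` is either unranked or ranked strictly later. -/
def Prefers {k m : ℕ} (pref : Fin k → Fin m) (j j' : Fin m) : Prop :=
  ∃ h : Fin k, pref h = j ∧
    ((∀ h' : Fin k, pref h' ≠ j') ∨ ∃ h' : Fin k, pref h' = j' ∧ h < h')

/-- `q` is consistent with the profile `pref` of top-`k` rankings, given candidate
locations `c` and expert locations `e`. -/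
def Consistent {n k m : ℕ} (c : Fin m → V) (e : Fin n → V)
    (pref : Fin n → Fin k → Fin m) (q : Fin m → ℝ) : Prop :=
  ∀ (i : Fin n) (j j' : Fin m), Prefers (pref i) j j' →
    q j' - ‖e i - c j'‖ ≤ q j - ‖e i - c j‖

/-- Edge relation of the graph `G(C, E, ≻^k)`. -/
def HasEdge {n k m : ℕ} (pref : Fin n → Fin k → Fin m) (j j' : Fin m) : Prop :=
  ∃ i : Fin n, Prefers (pref i) j j'

/-- Weight of the edge `j → j'` in `G(C, E, ≻^k)`: the minimum of
`‖e i - c j'‖ - ‖e i - c j‖` over experts `i` preferring `j` to `j'`. -/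
noncomputable def weightG {n k m : ℕ} (c : Fin m → V) (e : Fin n → V)
    (pref : Fin n → Fin k → Fin m) (j j' : Fin m) : ℝ :=
  sInf {x : ℝ | ∃ i : Fin n, Prefers (pref i) j j' ∧ x = ‖e i - c j'‖ - ‖e i - c j‖}

/-- A directed walk along `edge` from `g` to `h`, recorded as its list of vertices. -/
def IsWalk {α : Type*} (edge : α → α → Prop) (l : List α) (g h : α) : Prop :=
  l.Chain' edge ∧ l.head? = some g ∧ l.getLast? = some h

/-- Total weight of a walk (sum of the weights of consecutive pairs). -/
noncomputable def walkWeight {α : Type*} (w : α → α → ℝ) (l : List α) : ℝ :=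
  ((l.zip l.tail).map fun p => w p.1 p.2).sum

/-- Shortest directed path distance; `+∞` if there is no directed path. -/
noncomputable def distG {α : Type*} (edge : α → α → Prop) (w : α → α → ℝ) (g h : α) : EReal :=
  sInf {x : EReal | ∃ l : List α, IsWalk edge l g h ∧ x = ((walkWeight w l : ℝ) : EReal)}

/-- Distance (number of edges) in an unweighted directed graph; `⊤` if unreachable. -/
noncomputable def hopDist {α : Type*} (edge : α → α → Prop) (g h : α) : ℕ∞ :=
  sInf {x : ℕ∞ | ∃ l : List α, IsWalk edge l g h ∧ x = ((l.length - 1 : ℕ) : ℕ∞)}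

/-- `diam(G, S)`: the longest shortest-path length between two vertices of `S`. -/
noncomputable def diamS {α : Type*} (edge : α → α → Prop) (S : Set α) : ℕ∞ :=
  ⨆ (u : α) (_ : u ∈ S) (v : α) (_ : v ∈ S), hopDist edge u v

/-- Edge relation of the unweighted graph `G(C, E, ≻^k)[δ]`. -/
def EdgeDelta {n k m : ℕ} (e : Fin n → V) (pref : Fin n → Fin k → Fin m) (δ : ℝ)
    (j j' : Fin m) : Prop :=
  ∃ i i' : Fin n, Prefers (pref i) j j' ∧ Prefers (pref i') j' j ∧ ‖e i - e i'‖ ≤ δ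

/-- Minimum cardinality of an internal `δ`-cover of `Θ`; `⊤` if no finite cover exists. -/
noncomputable def coverNum (Θ : Set V) (δ : ℝ) : ℕ∞ :=
  sInf {x : ℕ∞ | ∃ X : Finset V, ↑X ⊆ Θ ∧ (∀ θ ∈ Θ, ∃ v ∈ X, ‖θ - v‖ ≤ δ) ∧ x = (X.card : ℕ∞)}

end VotingDefs

/-!
Fix a point `x` of the packing. At `x`, at every expert within distance `r` of `x`, and at every
point of an `r / 2`-net of `Θ ∩ B(x, r)`, place `k` candidates. The segment from `x` to an expert
outside the ball meets the sphere of radius `r`, so some net point is closer to this expert than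
`x` by at least `r / 2`; an expert inside the ball sits on a candidate location. Consequently the
location nearest to an expert stays optimal when a tent of height `r / 2` at `x` is added to, or
subtracted from, the zero quality vector. The two perturbed vectors admit the same ranking profile,
and on one of them the rule has regret at least `ℓ r / 4`. If this exceeds `ε`, the construction
must need more than `m` candidates, so the ball contains many experts. The balls around different
points of the packing are disjoint.
-/

section MetricSpace

open scoped Finset

variable {α : Type*} [PseudoMetricSpace α]

/-- The function of height `s` at `x` that decreases at unit rate with the distance to `x` until it
vanishes. It serves as the quality perturbation that no expert detects. -/
noncomputable def tent (x : α) (s : ℝ) (y : α) : ℝ := max 0 (s - dist y x)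

lemma abs_tent (x : α) (s : ℝ) (y : α) : |tent x s y| = tent x s y :=
  abs_of_nonneg (le_max_left _ _)

lemma tent_self {x : α} {s : ℝ} (hs : 0 ≤ s) : tent x s x = s := by
  simp [tent, hs]

lemma tent_eq_zero {x y : α} {s : ℝ} (h : s ≤ dist y x) : tent x s y = 0 :=
  max_eq_left (sub_nonpos.2 h)

lemma lipschitzWith_tent (x : α) (s : ℝ) : LipschitzWith 1 (tent x s) :=
  (LipschitzWith.of_le_add fun y z ↦ by
    linarith [dist_triangle_left z x y] : LipschitzWith 1 fun y ↦ s - dist y x).const_max 0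

/-- The locations `L` shield `p` from `x` with margin `s`: either `p` is itself in `L`, or some
location in `L` is closer to `p` than `x` is, by at least `s`. For an expert at `p` this hides
1-Lipschitz quality changes dominated by `tent x s`. -/
def Shields (L : Set α) (x : α) (s : ℝ) (p : α) : Prop :=
  p ∈ L ∨ ∃ y ∈ L, dist p y + s ≤ dist p x

lemma Shields.isMaxOn {L : Set α} {x p y : α} {s : ℝ} {g : α → ℝ} (h : Shields L x s p)
    (hy : IsMinOn (dist p) L y) (hg : LipschitzWith 1 g) (hgs : ∀ z, |g z| ≤ tent x s z) :
    IsMaxOn (fun z ↦ g z - dist p z) L y := by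
  intro z hz
  change g z - dist p z ≤ g y - dist p y
  rcases h with hp | ⟨w, hw, hws⟩
  · have hpy : dist p y ≤ 0 := (hy hp).trans_eq (dist_self p)
    have hzp : g z ≤ g p + dist z p := by simpa using hg.le_add_mul z p
    have hpg : g p ≤ g y + dist p y := by simpa using hg.le_add_mul p y
    linarith [dist_comm z p]
  · have hyw : dist p y ≤ dist p w := hy hw
    have hyz : dist p y ≤ dist p z := hy hz
    have hgy : g y = 0 := by
      have := hgs y
      rw [tent_eq_zero (by linarith [dist_triangle p y x])] at this
      exact abs_nonpos_iff.1 this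
    have hgz : g z ≤ dist p z - dist p y :=
      (le_of_abs_le (hgs z)).trans
        (max_le (sub_nonneg.2 hyz) (by linarith [dist_triangle p z x]))
    linarith

lemma exists_lt_dist_of_lt_ediam {Θ : Set α} {δ : ℝ}
    (h : ENNReal.ofReal δ < Metric.ediam Θ) (x : α) : ∃ a ∈ Θ, δ / 2 < dist a x := by
  contrapose! h
  refine Metric.ediam_le_of_forall_dist_le fun a ha b hb ↦ ?_
  linarith [dist_triangle_right a b x, h a ha, h b hb]

lemma sum_card_filter_dist_lt_le {ι : Type*} [Fintype ι] (e : ι → α) {δ : ℝ} {P : Finset α}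
    (hP : (P : Set α).Pairwise fun x y ↦ δ ≤ dist x y) :
    ∑ x ∈ P, #{i | dist (e i) x < δ / 2} ≤ Fintype.card ι := by
  rw [← Finset.card_biUnion]
  · exact Finset.card_le_univ _
  · intro x hx y hy hxy
    refine Finset.disjoint_filter.2 fun i _ hix hiy ↦ ?_
    linarith [hP hx hy hxy, dist_triangle_left x y (e i)]

end MetricSpace

section Covering

open scoped NNReal Pointwise

lemma coveringNumber_image_le {X Y : Type*} [PseudoEMetricSpace X] [PseudoEMetricSpace Y]
    {K : ℝ≥0} {φ : X → Y} (hφ : LipschitzWith K φ) (η : ℝ≥0) (A : Set X) :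
    Metric.coveringNumber (K * η) (φ '' A) ≤ Metric.coveringNumber η A := by
  refine le_iInf₂ fun C hCA ↦ le_iInf fun hC ↦ ?_
  exact ((hC.image_lipschitz hφ).coveringNumber_le_encard (Set.image_mono hCA)).trans
    (Set.encard_image_le φ C)

lemma coverNum_eq_coveringNumber {V : Type*} [NormedAddCommGroup V] (Θ : Set V) (δ : ℝ≥0) :
    coverNum Θ δ = Metric.coveringNumber δ Θ := by
  have isCover_iff (C : Set V) :
      Metric.IsCover δ Θ C ↔ ∀ θ ∈ Θ, ∃ v ∈ C, ‖θ - v‖ ≤ δ := by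
    simp [Metric.isCover_iff_subset_iUnion_closedBall, Set.subset_def, dist_eq_norm]
  refine le_antisymm (le_iInf₂ fun C hCΘ ↦ le_iInf fun hC ↦ ?_) (le_sInf ?_)
  · obtain hfin | hinf := C.finite_or_infinite
    · lift C to Finset V using hfin
      exact sInf_le ⟨C, hCΘ, (isCover_iff _).1 hC, Set.encard_coe_eq_coe_finsetCard C⟩
    · simp [hinf.encard_eq]
  · rintro _ ⟨C, hCΘ, hC, rfl⟩
    exact (((isCover_iff _).2 hC).coveringNumber_le_encard hCΘ).trans_eq
      (Set.encard_coe_eq_coe_finsetCard C)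

variable {V : Type*} [NormedAddCommGroup V] [NormedSpace ℝ V]

lemma coveringNumber_closedBall_le (x : V) (r η : ℝ≥0) :
    Metric.coveringNumber (r * η) (Metric.closedBall x r) ≤
      Metric.coveringNumber η (Metric.closedBall (0 : V) 1) := by
  have hφ : LipschitzWith r fun y : V ↦ x +ᵥ (r : ℝ) • y := by
    simpa [Function.comp_def] using
      (isometry_vadd V x).lipschitz.comp (lipschitzWith_smul (β := V) (r : ℝ))
  rw [← affinity_unitClosedBall r.coe_nonneg x, ← Set.image_smul, ← Set.image_vadd,
    Set.image_image]
  exact coveringNumber_image_le hφ η _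

lemma exists_finset_cover_of_subset_closedBall
    (hN : coverNum (Metric.closedBall (0 : V) 1) (1 / 4) ≠ ⊤) {x : V} {r : ℝ} (hr : 0 ≤ r)
    {S : Set V} (hS : S ⊆ Metric.closedBall x r) :
    ∃ Y : Finset V, ↑Y ⊆ S ∧ (∀ u ∈ S, ∃ y ∈ Y, dist u y ≤ r / 2) ∧
      Y.card ≤ (coverNum (Metric.closedBall (0 : V) 1) (1 / 4)).toNat := by
  lift r to ℝ≥0 using hr
  have hle : Metric.coveringNumber (r / 2) S ≤ coverNum (Metric.closedBall (0 : V) 1) (1 / 4) :=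
    calc Metric.coveringNumber (r / 2) S
      _ ≤ Metric.coveringNumber (r / 2 / 2) (Metric.closedBall x r) :=
        Metric.coveringNumber_subset_le hS
      _ = Metric.coveringNumber (r * (1 / 4)) (Metric.closedBall x r) := by congr 1; ring
      _ ≤ Metric.coveringNumber (1 / 4) (Metric.closedBall (0 : V) 1) :=
        coveringNumber_closedBall_le x r _
      _ = coverNum (Metric.closedBall (0 : V) 1) (1 / 4) := by
        simpa using (coverNum_eq_coveringNumber (Metric.closedBall (0 : V) 1) (1 / 4)).symm
  obtain ⟨Y, hYS, hYfin, hcover, hcard⟩ :=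
    Metric.exists_set_encard_eq_coveringNumber (ne_top_of_le_ne_top hN hle)
  lift Y to Finset V using hYfin
  refine ⟨Y, hYS, fun u hu ↦ ?_, ?_⟩
  · simpa using Metric.isCover_iff_subset_iUnion_closedBall.1 hcover hu
  · rw [← hcard, Set.encard_coe_eq_coe_finsetCard] at hle
    simpa using ENat.toNat_le_toNat hle hN

end Covering

section Arithmetic

lemma ne_top_and_mul_toNat_add_one_le {k m : ℕ} {N : ℕ∞} (hk : k ≠ 0)
    (h : (k : ℕ∞) * (N + 1) ≤ m) : N ≠ ⊤ ∧ k * (N.toNat + 1) ≤ m := by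
  have hN : N ≠ ⊤ := by
    rintro rfl
    simp [ENat.mul_top, hk] at h
  lift N to ℕ using hN
  exact ⟨ENat.natCast_ne_top N, by exact_mod_cast h⟩

lemma div_mul_sub_one_le_div_sub {K : Type*} [Field K] [LinearOrder K] [IsStrictOrderedRing K]
    {t k d : K} (hk : 0 < k) (hd : 1 ≤ d) (h : k * d ≤ t) : t / (k * d) - 1 ≤ t / k - d := by
  have hd0 : 0 < d := zero_lt_one.trans_le hd
  have hdt : 0 ≤ t / k - d := by rw [sub_nonneg, le_div_iff₀' hk]; exact h
  calc t / (k * d) - 1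
    _ = (t / k - d) / d := by rw [sub_div, div_self hd0.ne', div_div]
    _ ≤ t / k - d := div_le_self hdt hd

end Arithmetic

section Shielding

open scoped Finset

variable {V : Type*} [NormedAddCommGroup V] [NormedSpace ℝ V] {Θ : Set V} {x a : V} {r : ℝ}

lemma exists_mem_dist_eq_of_convex (hΘ : Convex ℝ Θ) (hx : x ∈ Θ) (ha : a ∈ Θ) (hr : 0 ≤ r)
    (hra : r ≤ dist a x) : ∃ u ∈ Θ, dist u x = r ∧ dist a u + r = dist a x := by
  set t := r / dist a x
  have ht0 : 0 ≤ t := div_nonneg hr dist_nonneg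
  have ht1 : t ≤ 1 := div_le_one_of_le₀ hra dist_nonneg
  have htr : t * dist a x = r := div_mul_cancel_of_imp fun h ↦ le_antisymm (hra.trans_eq h) hr
  refine ⟨AffineMap.lineMap x a t, hΘ.lineMap_mem hx ha ⟨ht0, ht1⟩, ?_, ?_⟩
  · rw [dist_lineMap_left, Real.norm_of_nonneg ht0, dist_comm x, htr]
  · rw [dist_right_lineMap, Real.norm_of_nonneg (sub_nonneg.2 ht1), dist_comm x]
    linarith

lemma exists_finset_shields {ι : Type*} [Fintype ι] {e : ι → V} (he : ∀ i, e i ∈ Θ)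
    (hN : coverNum (Metric.closedBall (0 : V) 1) (1 / 4) ≠ ⊤) (hΘ : Convex ℝ Θ) (hx : x ∈ Θ)
    (hr : 0 ≤ r) (ha : a ∈ Θ) (hra : r ≤ dist a x) :
    ∃ L : Finset V, ↑L ⊆ Θ ∧ x ∈ L ∧ (∃ z ∈ L, r / 2 ≤ dist z x) ∧
      (∀ i, Shields ↑L x (r / 2) (e i)) ∧
      #L ≤ (coverNum (Metric.closedBall (0 : V) 1) (1 / 4)).toNat +
        #{i | dist (e i) x < r} + 1 := by
  obtain ⟨Y, hYΘ, hY, hYcard⟩ :=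
    exists_finset_cover_of_subset_closedBall hN hr (S := Θ ∩ Metric.closedBall x r)
      Set.inter_subset_right
  have exists_closer : ∀ b ∈ Θ, r ≤ dist b x →
      ∃ y ∈ Y, r / 2 ≤ dist y x ∧ dist b y + r / 2 ≤ dist b x := by
    intro b hb hrb
    obtain ⟨u, hu, hux, hbu⟩ := exists_mem_dist_eq_of_convex hΘ hx hb hr hrb
    obtain ⟨y, hy, huy⟩ := hY u ⟨hu, hux.le⟩
    exact ⟨y, hy, by linarith [dist_triangle u y x], by linarith [dist_triangle b u y]⟩
  set A : Finset ι := {i | dist (e i) x < r}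
  refine ⟨insert x (Y ∪ A.image e), ?_, by simp, ?_, fun i ↦ ?_, ?_⟩
  · rw [Finset.coe_insert, Finset.coe_union, Finset.coe_image]
    exact Set.insert_subset hx (Set.union_subset (hYΘ.trans Set.inter_subset_left)
      (Set.image_subset_iff.2 fun i _ ↦ he i))
  · obtain ⟨z, hz, hzx, -⟩ := exists_closer a ha hra
    exact ⟨z, by simp [hz], hzx⟩
  · obtain hi | hi := lt_or_ge (dist (e i) x) r
    · have hiA : i ∈ A := by simpa [A] using hi
      exact .inl (by simpa using .inr (.inr ⟨i, hiA, rfl⟩))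
    · obtain ⟨y, hy, -, hyx⟩ := exists_closer (e i) (he i) hi
      exact .inr ⟨y, by simp [hy], hyx⟩
  · calc #(insert x (Y ∪ A.image e))
      _ ≤ #Y + #(A.image e) + 1 :=
        (Finset.card_insert_le _ _).trans (Nat.add_le_add_right (Finset.card_union_le _ _) 1)
      _ ≤ _ := by gcongr; exact Finset.card_image_le

end Shielding

section Regret

open scoped Finset

variable {V : Type*} [NormedAddCommGroup V] {n k ℓ m : ℕ} {ε : ℝ} {Θ : Set V}
  {e : Fin n → V} {f : (Fin m → V) → (Fin n → Fin k → Fin m) → Finset (Fin m)}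

lemma consistent_of_forall_le {c : Fin m → V} {pref : Fin n → Fin k → Fin m} {q : Fin m → ℝ}
    (h : ∀ i a j, q j - dist (e i) (c j) ≤ q (pref i a) - dist (e i) (c (pref i a))) :
    Consistent c e pref q := by
  rintro i _ j ⟨a, rfl, -⟩
  simpa only [dist_eq_norm] using h i a j

lemma exists_copies {α : Type*} {L : Finset α} (hL : L.Nonempty) (h : #L * k ≤ m) :
    ∃ (c : Fin m → α) (φ : L → Fin k ↪ Fin m), (∀ j, c j ∈ L) ∧ ∀ y a, c (φ y a) = y := by
  obtain ⟨φ⟩ : Nonempty (L × Fin k ↪ Fin m) :=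
    Function.Embedding.nonempty_of_card_le (by simpa using h)
  obtain ⟨x, hx⟩ := hL
  let c : Fin m → L := Function.extend φ Prod.fst fun _ ↦ ⟨x, hx⟩
  exact ⟨fun j ↦ c j, fun y ↦ (Function.Embedding.sectR y (Fin k)).trans φ, fun j ↦ (c j).2,
    fun y a ↦ congrArg Subtype.val (φ.injective.extend_apply _ _ (y, a))⟩

/-- On candidates located in `Θ` and experts at `e`, the cumulative regret of the voting rule `f`
against every set of `ℓ` candidates is at most `ε`, whatever the qualities and the consistent
profile. -/
def HasRegretLE (ε : ℝ) (Θ : Set V) (ℓ : ℕ) (e : Fin n → V)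
    (f : (Fin m → V) → (Fin n → Fin k → Fin m) → Finset (Fin m)) : Prop :=
  ∀ c : Fin m → V, (∀ j, c j ∈ Θ) → ∀ (q : Fin m → ℝ) (pref : Fin n → Fin k → Fin m),
    (∀ i, Function.Injective (pref i)) → Consistent c e pref q →
    ∀ S : Finset (Fin m), #S = ℓ → ∑ j ∈ S, q j - ∑ j ∈ f c pref, q j ≤ ε

namespace HasRegretLE

lemma sum_sub_sum_le (hf : HasRegretLE ε Θ ℓ e f) {c : Fin m → V} (hc : ∀ j, c j ∈ Θ)
    {pref : Fin n → Fin k → Fin m} (hpref : ∀ i, Function.Injective (pref i)) {q : Fin m → ℝ}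
    (hq : Consistent c e pref q) (hq' : Consistent c e pref (-q)) {S T : Finset (Fin m)}
    (hS : #S = ℓ) (hT : #T = ℓ) : ∑ j ∈ S, q j - ∑ j ∈ T, q j ≤ 2 * ε := by
  have regret_q := hf c hc q pref hpref hq S hS
  have regret_neg := hf c hc (-q) pref hpref hq' T hT
  simp only [Pi.neg_apply, Finset.sum_neg_distrib] at regret_neg
  linarith

lemma mul_le_of_shields (hf : HasRegretLE ε Θ ℓ e f) (hℓk : ℓ ≤ k) {L : Finset V}
    (hLΘ : ↑L ⊆ Θ) (hLm : #L * k ≤ m) {x z : V} {s : ℝ} (hs : 0 ≤ s) (hx : x ∈ L) (hz : z ∈ L)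
    (hsz : s ≤ dist z x) (hL : ∀ i, Shields ↑L x s (e i)) : ℓ * s ≤ 2 * ε := by
  obtain ⟨c, φ, hcL, hcφ⟩ := exists_copies ⟨x, hx⟩ hLm
  have exists_nearest (i) : ∃ y : L, IsMinOn (dist (e i)) L y := by
    obtain ⟨y, hy, hmin⟩ := L.exists_min_image (dist (e i)) ⟨x, hx⟩
    exact ⟨⟨y, hy⟩, hmin⟩
  choose near hnear using exists_nearest
  have consistent_comp {g : V → ℝ} (hg : LipschitzWith 1 g) (hgs : ∀ y, |g y| ≤ tent x s y) :
      Consistent c e (fun i a ↦ φ (near i) a) (g ∘ c) :=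
    consistent_of_forall_le fun i a j ↦ by
      simpa [hcφ] using (hL i).isMaxOn (hnear i) hg hgs (hcL j)
  let copies (y : L) : Finset (Fin m) := Finset.univ.map ((Fin.castLEEmb hℓk).trans (φ y))
  have sum_copies (y : L) : ∑ j ∈ copies y, tent x s (c j) = ℓ * tent x s y := by
    simp [copies, hcφ]
  have hgap := hf.sum_sub_sum_le (fun j ↦ hLΘ (hcL j)) (fun i ↦ (φ (near i)).injective)
    (consistent_comp (lipschitzWith_tent x s) fun y ↦ (abs_tent x s y).le)
    (consistent_comp (lipschitzWith_tent x s).neg fun y ↦ by simp [abs_tent])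
    (S := copies ⟨x, hx⟩) (T := copies ⟨z, hz⟩) (by simp [copies]) (by simp [copies])
  simpa [sum_copies, tent_self hs, tent_eq_zero hsz] using hgap

lemma lt_mul_coverNum_add_card [NormedSpace ℝ V] (hf : HasRegretLE ε Θ ℓ e f) (hℓk : ℓ ≤ k)
    (he : ∀ i, e i ∈ Θ) (hN : coverNum (Metric.closedBall (0 : V) 1) (1 / 4) ≠ ⊤)
    (hΘ : Convex ℝ Θ) {x a : V} {r : ℝ} (hx : x ∈ Θ) (hr : 0 ≤ r) (ha : a ∈ Θ)
    (hra : r ≤ dist a x) (hεr : 4 * ε < ℓ * r) :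
    m < ((coverNum (Metric.closedBall (0 : V) 1) (1 / 4)).toNat +
      #{i | dist (e i) x < r} + 1) * k := by
  obtain ⟨L, hLΘ, hxL, ⟨z, hzL, hzx⟩, hL, hLcard⟩ := exists_finset_shields he hN hΘ hx hr ha hra
  by_contra! hm
  have := hf.mul_le_of_shields hℓk hLΘ ((Nat.mul_le_mul_right k hLcard).trans hm)
    (div_nonneg hr two_pos.le) hxL hzL hzx hL
  linarith

end HasRegretLE

theorem statement16_general [NormedSpace ℝ V] (hε : 0 ≤ ε) (hΘ : Convex ℝ Θ) {δ : ℝ}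
    (hεδ : 8 * ε < ℓ * δ) (hdiam : ENNReal.ofReal δ < Metric.ediam Θ) (hℓk : ℓ ≤ k)
    (hN : coverNum (Metric.closedBall (0 : V) 1) (1 / 4) ≠ ⊤) (he : ∀ i, e i ∈ Θ)
    (hf : HasRegretLE ε Θ ℓ e f) {P : Finset V} (hPΘ : ↑P ⊆ Θ)
    (hP : (P : Set V).Pairwise fun x y ↦ δ ≤ dist x y) :
    #P * ((m : ℝ) / k - ((coverNum (Metric.closedBall (0 : V) 1) (1 / 4)).toNat + 1)) ≤ n := by
  have hℓδ : 0 < (ℓ : ℝ) * δ := by linarith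
  have hδ : 0 < δ := pos_of_mul_pos_right hℓδ ℓ.cast_nonneg
  have hℓ : 0 < ℓ := by exact_mod_cast pos_of_mul_pos_left hℓδ hδ.le
  have hk : (0 : ℝ) < k := by exact_mod_cast hℓ.trans_le hℓk
  set N := (coverNum (Metric.closedBall (0 : V) 1) (1 / 4)).toNat
  have card_ball_ge : ∀ x ∈ P, (m : ℝ) / k - (N + 1) ≤ #{i | dist (e i) x < δ / 2} := by
    intro x hx
    obtain ⟨a, ha, hax⟩ := exists_lt_dist_of_lt_ediam hdiam x
    have hm := hf.lt_mul_coverNum_add_card hℓk he hN hΘ (hPΘ hx) (half_pos hδ).le ha hax.le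
      (by linarith)
    have hm' : (m : ℝ) / k < N + #{i | dist (e i) x < δ / 2} + 1 := by
      rw [div_lt_iff₀ hk]
      exact_mod_cast hm
    linarith
  calc #P * ((m : ℝ) / k - (N + 1))
    _ ≤ ∑ x ∈ P, (#{i | dist (e i) x < δ / 2} : ℝ) := by
      simpa using P.card_nsmul_le_sum _ _ card_ball_ge
    _ ≤ n := by exact_mod_cast (sum_card_filter_dist_lt_le e hP).trans_eq (Fintype.card_fin n)

end Regret

/-- **multi-winner lower bound.** Let `Θ ⊆ V` be convex with `diam(Θ) ≥ 12ε`,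
`k ≥ ℓ ≥ 1`, and `m ≥ k(N(B(0,1), ‖·‖, 1/4) + 1)`. If a committee `e` of `nE` experts in `Θ`
together with a deterministic rule `f` selecting `ℓ` candidates guarantees cumulative regret
at most `ε` for every `m` candidates in `Θ`, every quality vector, and every consistent
top-`k` profile, then `nE ≥ M(Θ, ‖·‖, 24ε/ℓ)·(m/(k(N(B(0,1), ‖·‖, 1/4) + 1)) - 1)`;
equivalently, the bound holds with `M` replaced by the cardinality of an arbitrary
`24ε/ℓ`-packing of `Θ`. -/
theorem statement16 {V : Type*} [NormedAddCommGroup V] [NormedSpace ℝ V]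
    (ε : ℝ) (hε : 0 < ε) (Θ : Set V) (hconv : Convex ℝ Θ)
    (hdiam : ENNReal.ofReal (12 * ε) ≤ EMetric.diam Θ)
    (k ℓ nE m : ℕ) (hℓ : 1 ≤ ℓ) (hℓk : ℓ ≤ k)
    (hm : (k : ℕ∞) * (coverNum (Metric.closedBall (0 : V) 1) (1 / 4) + 1) ≤ (m : ℕ∞))
    (e : Fin nE → V) (he : ∀ i, e i ∈ Θ)
    (f : (Fin m → V) → (Fin nE → Fin k → Fin m) → Finset (Fin m))
    (hfcard : ∀ c pref, (f c pref).card = ℓ)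
    (hf : ∀ (c : Fin m → V), (∀ j, c j ∈ Θ) →
      ∀ (q : Fin m → ℝ) (pref : Fin nE → Fin k → Fin m),
        (∀ i, Function.Injective (pref i)) → Consistent c e pref q →
        ∀ S' : Finset (Fin m), S'.card = ℓ →
          (∑ j ∈ S', q j) - (∑ j ∈ f c pref, q j) ≤ ε) :
    ∀ P : Finset V, ↑P ⊆ Θ →
      (∀ x ∈ P, ∀ y ∈ P, x ≠ y → 24 * ε / ℓ ≤ ‖x - y‖) →
      (P.card : ℝ) *
          ((m : ℝ) / ((k : ℝ) *
            (((coverNum (Metric.closedBall (0 : V) 1) (1 / 4)).toNat : ℝ) + 1)) - 1)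
        ≤ (nE : ℝ) := by
  intro P hPΘ hP
  have hk : 0 < k := hℓ.trans hℓk
  obtain ⟨hN, hm⟩ := ne_top_and_mul_toNat_add_one_le hk.ne' hm
  have hδ : 10 * ε / ℓ < 12 * ε :=
    (div_le_self (by positivity) (by exact_mod_cast hℓ)).trans_lt (by linarith)
  refine (mul_le_mul_of_nonneg_left
    (div_mul_sub_one_le_div_sub (by exact_mod_cast hk) ?_ (by exact_mod_cast hm)) (by simp)).trans
    (statement16_general hε.le hconv (δ := 10 * ε / ℓ) ?_ ?_ hℓk hN he hf hPΘ ?_)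
  · simp
  · field_simp; linarith
  · exact ((ENNReal.ofReal_lt_ofReal_iff (by positivity)).2 hδ).trans_le hdiam
  · intro x hx y hy hxy
    rw [dist_eq_norm]
    exact le_trans (by gcongr; norm_num) (hP x hx y hy hxy)
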